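/- Let f = Σ_{i=1}^{m} c_i X^{α_i} be a nonzero polynomial in ℂ[x_1,…,x_n] with distinct exponent vectors α_1,…,α_m, let p_1,…,p_{m−1} ∈ ℂ^n be zeros of f, and let G be the determinant of the m×m matrix over ℂ[x_1,…,x_n] whose first row consists of the monomials X^{α_1},…,X^{α_m} and whose (i+1)-th row (for i = 1,…,m−1) consists of the constants P_i^{α_1},…,P_i^{α_m}. For 1 ≤ k ≤ m, let X_k^* denote the determinant of the (m−1)×(m−1) matrix obtained by deleting row 1 and column k. If G ≠ 0, then there exists an index k with c_k ≠ 0 and X_k^* ≠ 0. -/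

import Mathlib

open MvPolynomial

/-! Since `f` vanishes at every `p i`, the interpolation matrix `M` sends the coefficient vector
`c` of `f` to `(f, 0, …, 0)`. Multiplying by the adjugate of `M` gives Cramer's rule
`G * c k = ± f * X_k^*`, so over a domain every nonzero coefficient has a nonzero minor. -/

theorem det_mul_apply_of_mulVec_eq_single {R : Type*} [CommRing R] {m : ℕ}
    {M : Matrix (Fin (m + 1)) (Fin (m + 1)) R} {v : Fin (m + 1) → R} {i : Fin (m + 1)} {a : R}
    (h : M.mulVec v = Pi.single i a) (k : Fin (m + 1)) :
    M.det * v k = (-1) ^ (i + k : ℕ) * (M.submatrix i.succAbove k.succAbove).det * a := by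
  calc M.det * v k = M.adjugate.mulVec (M.mulVec v) k := by
        simp [Matrix.mulVec_mulVec, Matrix.adjugate_mul, Matrix.smul_mulVec]
    _ = M.adjugate k i * a := by simp [h]
    _ = _ := by rw [Matrix.adjugate_fin_succ_eq_det_submatrix]

section InterpolationMatrix

variable {σ R : Type*}

theorem exists_ne_zero_of_sum_monomial_ne_zero [CommSemiring R] {κ : Type*} [Fintype κ]
    {α : κ → σ →₀ ℕ} {c : κ → R} (h : ∑ j, monomial (α j) (c j) ≠ 0) : ∃ k, c k ≠ 0 := by
  obtain ⟨k, -, hk⟩ := Finset.exists_ne_zero_of_sum_ne_zero h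
  exact ⟨k, mt monomial_eq_zero.mpr hk⟩

/-- The generalized Vandermonde matrix `(P_i^{α_j})` of values of monomials at points: rows are
indexed by the points, columns by the exponents. -/
noncomputable def monomialEvalMatrix [CommSemiring R] {ι κ : Type*} (α : κ → σ →₀ ℕ)
    (p : ι → σ → R) : Matrix ι κ R :=
  Matrix.of fun i j => eval (p i) (monomial (α j) 1)

/-- The matrix whose determinant is the interpolation determinant `G`: the row of monomials
`X^{α_j}`, placed at index `0`, above the constants `P_i^{α_j}`. -/
noncomputable def interpolationMatrix [CommSemiring R] {m : ℕ} {κ : Type*} (α : κ → σ →₀ ℕ)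
    (p : Fin m → σ → R) : Matrix (Fin (m + 1)) κ (MvPolynomial σ R) :=
  Matrix.of (Matrix.vecCons (fun j => monomial (α j) 1)
    (fun i j => C (monomialEvalMatrix α p i j)))

theorem monomialEvalMatrix_mulVec [CommSemiring R] {ι κ : Type*} [Fintype κ] (α : κ → σ →₀ ℕ)
    (p : ι → σ → R) (c : κ → R) (i : ι) :
    (monomialEvalMatrix α p).mulVec c i = eval (p i) (∑ j, monomial (α j) (c j)) := by
  simp [monomialEvalMatrix, Matrix.mulVec, dotProduct, eval_monomial, mul_comm]

theorem interpolationMatrix_mulVec [CommSemiring R] {m : ℕ} {κ : Type*} [Fintype κ]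
    (α : κ → σ →₀ ℕ) (p : Fin m → σ → R) (c : κ → R) :
    (interpolationMatrix α p).mulVec (fun j => C (c j)) =
      Matrix.vecCons (∑ j, monomial (α j) (c j))
        (fun i => C (eval (p i) (∑ j, monomial (α j) (c j)))) := by
  rw [interpolationMatrix, Matrix.cons_mulVec]
  congr 1
  · simp [dotProduct, mul_comm, C_mul_monomial]
  · funext i
    rw [← monomialEvalMatrix_mulVec, RingHom.map_mulVec]
    rfl

theorem interpolationMatrix_mulVec_eq_single [CommSemiring R] {m : ℕ} {κ : Type*} [Fintype κ]
    {α : κ → σ →₀ ℕ} {p : Fin m → σ → R} {c : κ → R}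
    (hp : ∀ i, eval (p i) (∑ j, monomial (α j) (c j)) = 0) :
    (interpolationMatrix α p).mulVec (fun j => C (c j)) =
      Pi.single (0 : Fin (m + 1)) (∑ j, monomial (α j) (c j)) := by
  rw [interpolationMatrix_mulVec]
  funext i
  refine Fin.cases ?_ (fun i => ?_) i
  · simp
  · simp [hp]

theorem det_interpolationMatrix_submatrix [CommRing R] {m : ℕ} {κ : Type*} (α : κ → σ →₀ ℕ)
    (p : Fin m → σ → R) (e : Fin m → κ) :
    ((interpolationMatrix α p).submatrix Fin.succ e).det =
      C (monomialEvalMatrix (α ∘ e) p).det := by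
  rw [RingHom.map_det]
  rfl

theorem det_interpolationMatrix_mul_C [CommRing R] {m : ℕ} {α : Fin (m + 1) → σ →₀ ℕ}
    {p : Fin m → σ → R} {c : Fin (m + 1) → R}
    (hp : ∀ i, eval (p i) (∑ j, monomial (α j) (c j)) = 0) (k : Fin (m + 1)) :
    (interpolationMatrix α p).det * C (c k) =
      (-1) ^ (k : ℕ) * C (monomialEvalMatrix (α ∘ k.succAbove) p).det *
        ∑ j, monomial (α j) (c j) := by
  rw [det_mul_apply_of_mulVec_eq_single (v := fun j => C (c j))
    (interpolationMatrix_mulVec_eq_single hp) k, Fin.succAbove_zero,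
    det_interpolationMatrix_submatrix, Fin.val_zero, zero_add]

theorem interpolation_exists_nonzero_coeff_and_minor_general [CommRing R] [NoZeroDivisors R]
    {m : ℕ} {α : Fin (m + 1) → σ →₀ ℕ} {p : Fin m → σ → R} {c : Fin (m + 1) → R}
    (hp : ∀ i, eval (p i) (∑ j, monomial (α j) (c j)) = 0)
    (hG : (interpolationMatrix α p).det ≠ 0) {k : Fin (m + 1)} (hk : c k ≠ 0) :
    (monomialEvalMatrix (α ∘ k.succAbove) p).det ≠ 0 := by
  intro hminor
  have hprod : (interpolationMatrix α p).det * C (c k) = 0 := by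
    rw [det_interpolationMatrix_mul_C hp, hminor, C_0, mul_zero, zero_mul]
  exact mul_ne_zero hG (C_ne_zero.mpr hk) hprod

end InterpolationMatrix

/-- With the interpolation determinant `G` as above, if `f ≠ 0` and
`G ≠ 0`, then there is a column index `k` with `c_k ≠ 0` and whose `(1,k)`-minor
`X_k^*` is nonzero. -/
theorem interpolation_exists_nonzero_coeff_and_minor
    (n m : ℕ)
    (α : Fin (m + 1) → (Fin n →₀ ℕ)) (hα : Function.Injective α)
    (c : Fin (m + 1) → ℂ)
    (f : MvPolynomial (Fin n) ℂ)
    (hf : f = ∑ i : Fin (m + 1), monomial (α i) (c i))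
    (hf0 : f ≠ 0)
    (p : Fin m → (Fin n → ℂ))
    (hp : ∀ i : Fin m, eval (p i) f = 0)
    (G : MvPolynomial (Fin n) ℂ)
    (hG : G = Matrix.det (Matrix.of (Fin.cases
      (fun j : Fin (m + 1) => monomial (α j) (1 : ℂ))
      (fun (i : Fin m) (j : Fin (m + 1)) =>
        C (eval (p i) (monomial (α j) (1 : ℂ)))))))
    (hG0 : G ≠ 0) :
    ∃ k : Fin (m + 1), c k ≠ 0 ∧
      Matrix.det (Matrix.of (fun (i : Fin m) (j : Fin m) =>
        eval (p i) (monomial (α (k.succAbove j)) (1 : ℂ)))) ≠ 0 := by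
  subst hf hG
  exact (exists_ne_zero_of_sum_monomial_ne_zero hf0).imp fun _ hk =>
    ⟨hk, interpolation_exists_nonzero_coeff_and_minor_general hp hG0 hk⟩
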